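/- arXiv:1004.3552 — 3 statements merged into one kernel-verified Lean document; each statement's English description precedes it below -/
import Mathlib

section
/- Let 𝒰 be a group of unitary operators on a separable complex Hilbert space H (i.e., a subgroup of the unitary group of H), and suppose f ∈ H is a frame vector for 𝒰 with frame bounds A² and B² (0 < A ≤ B). Then there exist: a Hilbert space K containing H (as a closed subspace), a group 𝒱 of unitary operators on K such that every V ∈ 𝒱 maps H into H and the restriction map V ↦ V|_H is a group isomorphism of 𝒱 onto 𝒰, a positive bounded operator E : K → H satisfying A‖g‖ ≤ ‖Eg‖ ≤ B‖g‖ for all g ∈ H, and a complete wandering vector e ∈ K for 𝒱, such that E(Ve) = (V|_H)f for all V ∈ 𝒱. -/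
local notation "⟪" x ", " y "⟫" => @inner ℂ _ _ x y

/-! Let `T : H → ℓ²(G)` be the analysis operator of the orbit `g ↦ π g f`. The frame bounds say that
`T` is bounded and bounded below, so in its polar decomposition `T = W |T|` the factor `W` is an
isometry; it embeds `H` into `K = ℓ²(G)`. As `T` intertwines `π` with the left regular
representation, so do `|T|` and `W`, and `E = W |T| W† = W T†` is positive. Finally `T†` sends the
delta function at `g` to `π g f`, so the delta function at `1` is the required wandering vector.
-/

open scoped InnerProduct InnerProductSpace lp ENNReal

section Polar

section AdjointComp

variable {𝕜 H K : Type*} [RCLike 𝕜]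
  [NormedAddCommGroup H] [InnerProductSpace 𝕜 H] [CompleteSpace H]
  [NormedAddCommGroup K] [InnerProductSpace 𝕜 K] [CompleteSpace K]

theorem adjoint_comp_self_nonneg (T : H →L[𝕜] K) : 0 ≤ T† ∘L T :=
  (ContinuousLinearMap.nonneg_iff_isPositive _).2 T.isPositive_adjoint_comp_self

theorem isUnit_adjoint_comp_self_of_bounded_below {T : H →L[𝕜] K} {c : ℝ} (hc : 0 < c)
    (hT : ∀ x, c * ‖x‖ ≤ ‖T x‖) : IsUnit (T† ∘L T) := by
  refine ContinuousLinearMap.isUnit_of_forall_le_norm_inner_map _ (c := ⟨c ^ 2, by positivity⟩)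
    (NNReal.coe_pos.1 (pow_pos hc 2)) fun x ↦ ?_
  calc ‖x‖ ^ 2 * c ^ 2 = (c * ‖x‖) ^ 2 := by ring
    _ ≤ ‖T x‖ ^ 2 := by gcongr; exact hT x
    _ = ‖⟪(T† ∘L T) x, x⟫_𝕜‖ := by
      simp [ContinuousLinearMap.adjoint_inner_left, inner_self_eq_norm_sq_to_K]

theorem commute_adjoint_comp_self_of_intertwines {T : H →L[𝕜] K} {U : H ≃ₗᵢ[𝕜] H} {V : K →ₗᵢ[𝕜] K}
    (hTU : ∀ x, T (U x) = V (T x)) :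
    Commute (T† ∘L T) (U.toContinuousLinearEquiv : H →L[𝕜] H) := by
  ext x
  refine ext_inner_right 𝕜 fun y ↦ ?_
  obtain ⟨z, rfl⟩ := U.surjective y
  calc ⟪(T†) (T (U x)), U z⟫_𝕜 = ⟪T x, T z⟫_𝕜 := by
        rw [ContinuousLinearMap.adjoint_inner_left, hTU, hTU, V.inner_map_map]
    _ = ⟪U ((T†) (T x)), U z⟫_𝕜 := by
        rw [U.inner_map_map, ContinuousLinearMap.adjoint_inner_left]

end AdjointComp

variable {H K : Type*}
  [NormedAddCommGroup H] [InnerProductSpace ℂ H] [CompleteSpace H]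
  [NormedAddCommGroup K] [InnerProductSpace ℂ K] [CompleteSpace K]

/-- The absolute value `|T| = (T† T)^(1/2)` of a bounded operator between two Hilbert spaces.
(`CFC.abs` covers only the case `H = K`.) -/
noncomputable def operatorAbs (T : H →L[ℂ] K) : H →L[ℂ] H :=
  CFC.sqrt (T† ∘L T)

theorem isPositive_operatorAbs (T : H →L[ℂ] K) : (operatorAbs T).IsPositive :=
  (ContinuousLinearMap.nonneg_iff_isPositive _).1 (CFC.sqrt_nonneg _)

theorem operatorAbs_operatorAbs_apply (T : H →L[ℂ] K) (x : H) :
    operatorAbs T (operatorAbs T x) = (T†) (T x) :=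
  DFunLike.congr_fun (CFC.sqrt_mul_sqrt_self _ (adjoint_comp_self_nonneg T)) x

theorem norm_operatorAbs_apply (T : H →L[ℂ] K) (x : H) : ‖operatorAbs T x‖ = ‖T x‖ := by
  refine (sq_eq_sq₀ (norm_nonneg _) (norm_nonneg _)).1 ?_
  have h : ⟪operatorAbs T x, operatorAbs T x⟫_ℂ = ⟪T x, T x⟫_ℂ := by
    rw [(isPositive_operatorAbs T).inner_left_eq_inner_right, operatorAbs_operatorAbs_apply,
      ContinuousLinearMap.adjoint_inner_right]
  simp only [inner_self_eq_norm_sq_to_K] at h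
  exact_mod_cast h

theorem isUnit_operatorAbs_of_bounded_below {T : H →L[ℂ] K} {c : ℝ} (hc : 0 < c)
    (hT : ∀ x, c * ‖x‖ ≤ ‖T x‖) : IsUnit (operatorAbs T) :=
  (CFC.isUnit_sqrt_iff _ (adjoint_comp_self_nonneg T)).2
    (isUnit_adjoint_comp_self_of_bounded_below hc hT)

theorem operatorAbs_map_of_intertwines {T : H →L[ℂ] K} {U : H ≃ₗᵢ[ℂ] H} {V : K →ₗᵢ[ℂ] K}
    (hTU : ∀ x, T (U x) = V (T x)) (x : H) :
    operatorAbs T (U x) = U (operatorAbs T x) :=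
  DFunLike.congr_fun ((commute_adjoint_comp_self_of_intertwines hTU).cfcₙ_nnreal NNReal.sqrt).eq x

/-- The isometric factor `W = T |T|⁻¹` in the polar decomposition `T = W |T|` of a bounded
operator whose absolute value is invertible. -/
noncomputable def polarIsometry (T : H →L[ℂ] K) (hT : IsUnit (operatorAbs T)) : H →ₗᵢ[ℂ] K where
  toLinearMap := (T ∘L (↑hT.unit⁻¹ : H →L[ℂ] H)).toLinearMap
  norm_map' x := by
    change ‖T ((↑hT.unit⁻¹ : H →L[ℂ] H) x)‖ = ‖x‖
    rw [← norm_operatorAbs_apply]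
    exact congrArg norm (DFunLike.congr_fun hT.mul_val_inv x)

variable {T : H →L[ℂ] K} (hT : IsUnit (operatorAbs T))

theorem polarIsometry_operatorAbs_apply (x : H) : polarIsometry T hT (operatorAbs T x) = T x :=
  congrArg T (DFunLike.congr_fun hT.val_inv_mul x)

include hT in
theorem operatorAbs_surjective : Function.Surjective (operatorAbs T) := fun x ↦
  ⟨(↑hT.unit⁻¹ : H →L[ℂ] H) x, DFunLike.congr_fun hT.mul_val_inv x⟩

theorem polarIsometry_map_of_intertwines {U : H ≃ₗᵢ[ℂ] H} {V : K →ₗᵢ[ℂ] K}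
    (hTU : ∀ x, T (U x) = V (T x)) (x : H) :
    polarIsometry T hT (U x) = V (polarIsometry T hT x) := by
  obtain ⟨y, rfl⟩ := operatorAbs_surjective hT x
  rw [← operatorAbs_map_of_intertwines hTU, polarIsometry_operatorAbs_apply,
    polarIsometry_operatorAbs_apply, hTU]

theorem adjoint_polarIsometry_apply (x : H) : (T†) (polarIsometry T hT x) = operatorAbs T x := by
  obtain ⟨y, rfl⟩ := operatorAbs_surjective hT x
  rw [polarIsometry_operatorAbs_apply, operatorAbs_operatorAbs_apply]

theorem norm_polarIsometry_adjoint_polarIsometry_apply (x : H) :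
    ‖polarIsometry T hT ((T†) (polarIsometry T hT x))‖ = ‖T x‖ := by
  rw [LinearIsometry.norm_map, adjoint_polarIsometry_apply, norm_operatorAbs_apply]

theorem isPositive_polarIsometry_comp_adjoint :
    ((polarIsometry T hT).toContinuousLinearMap ∘L T†).IsPositive := by
  set W : H →L[ℂ] K := (polarIsometry T hT).toContinuousLinearMap
  have hW : W ∘L operatorAbs T = T := ContinuousLinearMap.ext (polarIsometry_operatorAbs_apply hT)
  have hT_adjoint : T† = operatorAbs T ∘L W† := by
    conv_lhs => rw [← hW, ContinuousLinearMap.adjoint_comp,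
      (isPositive_operatorAbs T).isSelfAdjoint.adjoint_eq]
  rw [hT_adjoint]
  exact (isPositive_operatorAbs T).conj_adjoint W

end Polar

section Analysis

variable {𝕜 H I : Type*} [RCLike 𝕜] [NormedAddCommGroup H] [InnerProductSpace 𝕜 H]

variable (𝕜) in
/-- A Bessel family with bound `C`, i.e. one satisfying the upper frame inequality.
Summability is a separate field because a divergent `∑'` has the value `0`. -/
structure IsBessel (v : I → H) (C : ℝ) : Prop where
  summable (x : H) : Summable fun i ↦ ‖⟪v i, x⟫_𝕜‖ ^ 2
  tsum_le (x : H) : ∑' i, ‖⟪v i, x⟫_𝕜‖ ^ 2 ≤ C * ‖x‖ ^ 2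

theorem isBessel_of_frame_bounds {v : I → H} {c C : ℝ} (hc : 0 < c)
    (hv : ∀ x : H, c * ‖x‖ ^ 2 ≤ ∑' i, ‖⟪v i, x⟫_𝕜‖ ^ 2 ∧
      ∑' i, ‖⟪v i, x⟫_𝕜‖ ^ 2 ≤ C * ‖x‖ ^ 2) :
    IsBessel 𝕜 v C where
  summable x := by
    by_contra h
    have hx : x ≠ 0 := by
      rintro rfl
      exact h (by simp)
    have hpos : 0 < c * ‖x‖ ^ 2 := by positivity
    exact hpos.not_ge ((hv x).1.trans_eq (tsum_eq_zero_of_not_summable h))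
  tsum_le x := (hv x).2

theorem l2_norm_sq_eq_tsum {E : I → Type*} [∀ i, NormedAddCommGroup (E i)] (a : lp E 2) :
    ‖a‖ ^ 2 = ∑' i, ‖a i‖ ^ 2 := by
  simpa using lp.norm_rpow_eq_tsum (p := 2) (by norm_num) a

/-- The analysis operator `x ↦ (⟪v i, x⟫)ᵢ` of a Bessel family. -/
noncomputable def analysisOperator {v : I → H} {C : ℝ} (hv : IsBessel 𝕜 v C) :
    H →L[𝕜] ℓ²(I, 𝕜) :=
  LinearMap.mkContinuous
    { toFun x := ⟨fun i ↦ ⟪v i, x⟫_𝕜, memℓp_gen (by simpa using hv.summable x)⟩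
      map_add' x y := by ext i; exact inner_add_right _ _ _
      map_smul' c x := by ext i; exact inner_smul_right _ _ _ }
    (√C) fun x ↦ by
      rw [← Real.sqrt_sq (norm_nonneg x), ← Real.sqrt_mul' C (sq_nonneg _)]
      exact Real.le_sqrt_of_sq_le ((l2_norm_sq_eq_tsum _).trans_le (hv.tsum_le x))

variable {v : I → H} {C : ℝ} (hv : IsBessel 𝕜 v C)

@[simp]
theorem analysisOperator_apply (x : H) (i : I) : analysisOperator hv x i = ⟪v i, x⟫_𝕜 := rfl

theorem norm_sq_analysisOperator (x : H) :
    ‖analysisOperator hv x‖ ^ 2 = ∑' i, ‖⟪v i, x⟫_𝕜‖ ^ 2 :=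
  l2_norm_sq_eq_tsum _

theorem mul_norm_le_norm_analysisOperator {c : ℝ} {x : H}
    (hc : c ^ 2 * ‖x‖ ^ 2 ≤ ∑' i, ‖⟪v i, x⟫_𝕜‖ ^ 2) : c * ‖x‖ ≤ ‖analysisOperator hv x‖ := by
  refine le_of_sq_le_sq ?_ (norm_nonneg _)
  rwa [mul_pow, norm_sq_analysisOperator]

theorem norm_analysisOperator_le {B : ℝ} (hB : 0 ≤ B) (hv : IsBessel 𝕜 v (B ^ 2)) (x : H) :
    ‖analysisOperator hv x‖ ≤ B * ‖x‖ := by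
  refine le_of_sq_le_sq ?_ (by positivity)
  rw [mul_pow, norm_sq_analysisOperator]
  exact hv.tsum_le x

theorem adjoint_analysisOperator_single [CompleteSpace H] [DecidableEq I] (i : I) :
    ((analysisOperator hv)†) (lp.single 2 i (1 : 𝕜)) = v i := by
  refine ext_inner_right 𝕜 fun x ↦ ?_
  rw [ContinuousLinearMap.adjoint_inner_left, lp.inner_single_left]
  simp

end Analysis

section Relabelling

variable {𝕜 I J E : Type*} [NormedAddCommGroup E]

theorem memℓp_comp_injective {p : ℝ≥0∞} {a : I → E}
    (ha : Memℓp a p) {σ : J → I} (hσ : Function.Injective σ) : Memℓp (fun j ↦ a (σ j)) p := by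
  rcases p.trichotomy with rfl | rfl | hp
  · exact memℓp_zero (ha.finite_dsupport.preimage hσ.injOn)
  · exact memℓp_infty (ha.bddAbove.mono (Set.range_comp_subset_range σ fun i ↦ ‖a i‖))
  · exact memℓp_gen ((ha.summable hp).comp_injective hσ)

variable [NormedField 𝕜] [NormedSpace 𝕜 E]

variable (𝕜) in
/-- Relabelling the coordinates of `ℓ²` along a bijection, as a unitary operator. -/
noncomputable def l2Congr (σ : I ≃ J) : ℓ²(I, E) ≃ₗᵢ[𝕜] ℓ²(J, E) where
  toFun a := ⟨fun j ↦ a (σ.symm j), memℓp_comp_injective (lp.memℓp a) σ.symm.injective⟩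
  invFun a := ⟨fun i ↦ a (σ i), memℓp_comp_injective (lp.memℓp a) σ.injective⟩
  map_add' _ _ := rfl
  map_smul' _ _ := rfl
  left_inv a := by ext i; simp
  right_inv a := by ext j; simp
  norm_map' a := by
    refine (sq_eq_sq₀ (norm_nonneg _) (norm_nonneg _)).1 ?_
    rw [l2_norm_sq_eq_tsum, l2_norm_sq_eq_tsum]
    exact σ.symm.tsum_eq fun i ↦ ‖a i‖ ^ 2

theorem l2Congr_apply (σ : I ≃ J) (a : ℓ²(I, E)) (j : J) :
    l2Congr 𝕜 σ a j = a (σ.symm j) := rfl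

theorem l2Congr_single [DecidableEq I] [DecidableEq J] (σ : I ≃ J) (i : I) (c : E) :
    l2Congr 𝕜 σ (lp.single 2 i c) = lp.single 2 (σ i) c := by
  ext j
  simp [l2Congr_apply, Pi.single_apply, Equiv.symm_apply_eq]

end Relabelling

section LeftRegular

variable (𝕜 : Type*) [RCLike 𝕜] (G : Type*) [Group G]

/-- The left regular representation `(g · a) h = a (g⁻¹ h)` of a group on `ℓ²(G)`. -/
noncomputable def l2LeftRegular : G →* (ℓ²(G, 𝕜) ≃ₗᵢ[𝕜] ℓ²(G, 𝕜)) where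
  toFun g := l2Congr 𝕜 (Equiv.mulLeft g)
  map_one' := by
    ext a h
    exact congrArg (a ·) (by group : (1 : G)⁻¹ * h = h)
  map_mul' g₁ g₂ := by
    ext a h
    exact congrArg (a ·) (by group : (g₁ * g₂)⁻¹ * h = g₂⁻¹ * (g₁⁻¹ * h))

variable {G}

theorem l2LeftRegular_apply (g : G) (a : ℓ²(G, 𝕜)) (h : G) :
    l2LeftRegular 𝕜 G g a h = a (g⁻¹ * h) := rfl

theorem l2LeftRegular_single_one [DecidableEq G] (g : G) :
    l2LeftRegular 𝕜 G g (lp.single 2 1 1) = lp.single 2 g 1 :=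
  (l2Congr_single (Equiv.mulLeft g) 1 1).trans (congrArg (lp.single 2 · 1) (mul_one g))

theorem l2LeftRegular_injective : Function.Injective (l2LeftRegular 𝕜 G) := by
  classical
  intro g₁ g₂ h
  have h_single : (lp.single 2 g₁ 1 : ℓ²(G, 𝕜)) g₁ = (lp.single 2 g₂ 1 : ℓ²(G, 𝕜)) g₁ := by
    rw [← l2LeftRegular_single_one, h, l2LeftRegular_single_one]
  by_contra hne
  simp [hne] at h_single

variable (G)

/-- The isomorphism of `G` onto the group of its left translations of `ℓ²(G)`. -/
noncomputable def l2LeftRegularEquivRange : G ≃* (l2LeftRegular 𝕜 G).range :=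
  MonoidHom.ofInjective (l2LeftRegular_injective 𝕜)

/-- The standard basis of `ℓ²(G)`, indexed by the translations that carry the delta function at
`1` to its members; its existence says that this delta function is a complete wandering vector. -/
noncomputable def l2TranslationBasis : HilbertBasis (l2LeftRegular 𝕜 G).range 𝕜 ℓ²(G, 𝕜) :=
  .ofRepr (l2Congr 𝕜 (l2LeftRegularEquivRange 𝕜 G).toEquiv)

theorem coe_l2TranslationBasis [DecidableEq G] :
    ⇑(l2TranslationBasis 𝕜 G) = fun V : (l2LeftRegular 𝕜 G).range ↦
      (V : ℓ²(G, 𝕜) ≃ₗᵢ[𝕜] ℓ²(G, 𝕜)) (lp.single 2 1 1) := by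
  classical
  funext V
  obtain ⟨g, rfl⟩ := (l2LeftRegularEquivRange 𝕜 G).surjective V
  refine (l2TranslationBasis 𝕜 G).repr.injective ?_
  rw [HilbertBasis.repr_self]
  exact ((congrArg _ (l2LeftRegular_single_one 𝕜 g)).trans (l2Congr_single _ g 1)).symm

end LeftRegular

section Orbit

variable {𝕜 H G : Type*} [RCLike 𝕜] [NormedAddCommGroup H] [InnerProductSpace 𝕜 H] [Group G]

theorem analysisOperator_orbit_map {π : G →* (H ≃ₗᵢ[𝕜] H)} {f : H} {C : ℝ}
    (hv : IsBessel 𝕜 (fun g ↦ π g f) C) (g : G) (x : H) :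
    analysisOperator hv (π g x) = l2LeftRegular 𝕜 G g (analysisOperator hv x) := by
  ext h
  have h_orbit : π g (π (g⁻¹ * h) f) = π h f := by
    rw [← Function.comp_apply (f := π g), ← LinearIsometryEquiv.coe_mul, ← map_mul,
      mul_inv_cancel_left]
  calc ⟪π h f, π g x⟫_𝕜 = ⟪π (g⁻¹ * h) f, x⟫_𝕜 := by rw [← h_orbit, (π g).inner_map_map]
    _ = l2LeftRegular 𝕜 G g (analysisOperator hv x) h := rfl

end Orbit

universe u v

/-- For a representation `π` with a kernel, the orbit of `f` counts as a frame with multiplicity and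
restriction to `H` maps `𝒱` onto the image of `π`. -/
theorem orthonormal_dilation_unitary_group_general {G : Type v} [Group G]
    {H : Type u} [NormedAddCommGroup H] [InnerProductSpace ℂ H] [CompleteSpace H]
    (π : G →* (H ≃ₗᵢ[ℂ] H)) (f : H) (A B : ℝ) (hA : 0 < A) (hB : 0 ≤ B)
    (hframe : ∀ x : H,
      A ^ 2 * ‖x‖ ^ 2 ≤ ∑' g, ‖⟪π g f, x⟫‖ ^ 2 ∧ ∑' g, ‖⟪π g f, x⟫‖ ^ 2 ≤ B ^ 2 * ‖x‖ ^ 2) :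
    ∃ (K : Type v) (_ : NormedAddCommGroup K) (_ : InnerProductSpace ℂ K) (_ : CompleteSpace K)
      (ι : H →ₗᵢ[ℂ] K) (𝒱 : Subgroup (K ≃ₗᵢ[ℂ] K)) (ρ : G ≃* 𝒱) (E : K →L[ℂ] K) (e : K),
      IsClosed (Set.range ι) ∧
      (∀ g x, (ρ g : K ≃ₗᵢ[ℂ] K) (ι x) = ι (π g x)) ∧
      E.IsPositive ∧ (∀ y, E y ∈ Set.range ι) ∧
      (∀ x, A * ‖ι x‖ ≤ ‖E (ι x)‖ ∧ ‖E (ι x)‖ ≤ B * ‖ι x‖) ∧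
      Orthonormal ℂ (fun V : 𝒱 ↦ (V : K ≃ₗᵢ[ℂ] K) e) ∧
      (Submodule.span ℂ (Set.range fun V : 𝒱 ↦ (V : K ≃ₗᵢ[ℂ] K) e)).topologicalClosure = ⊤ ∧
      (∀ g, E ((ρ g : K ≃ₗᵢ[ℂ] K) e) = ι (π g f)) := by
  classical
  have hv : IsBessel ℂ (fun g ↦ π g f) (B ^ 2) := isBessel_of_frame_bounds (pow_pos hA 2) hframe
  let T := analysisOperator hv
  have hT_lower x : A * ‖x‖ ≤ ‖T x‖ := mul_norm_le_norm_analysisOperator hv (hframe x).1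
  have hT : IsUnit (operatorAbs T) := isUnit_operatorAbs_of_bounded_below hA hT_lower
  let W := polarIsometry T hT
  have hW g x : W (π g x) = l2LeftRegular ℂ G g (W x) := polarIsometry_map_of_intertwines
    (V := (l2LeftRegular ℂ G g).toLinearIsometry) hT (analysisOperator_orbit_map hv g) x
  have hE x : ‖W ((T†) (W x))‖ = ‖T x‖ := norm_polarIsometry_adjoint_polarIsometry_apply hT x
  have hb := coe_l2TranslationBasis ℂ G
  exact ⟨ℓ²(G, ℂ), inferInstance, inferInstance, inferInstance, W, (l2LeftRegular ℂ G).range,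
    l2LeftRegularEquivRange ℂ G, W.toContinuousLinearMap ∘L T†, lp.single 2 1 1,
    W.isometry.isClosedEmbedding.isClosed_range, fun g x ↦ (hW g x).symm,
    isPositive_polarIsometry_comp_adjoint hT, fun y ↦ ⟨(T†) y, rfl⟩,
    fun x ↦ by simpa [hE] using ⟨hT_lower x, norm_analysisOperator_le hB hv x⟩,
    hb ▸ (l2TranslationBasis ℂ G).orthonormal, hb ▸ (l2TranslationBasis ℂ G).dense_span,
    fun g ↦ congrArg W ((congrArg (T†) (l2LeftRegular_single_one ℂ g)).trans
      (adjoint_analysisOperator_single hv g))⟩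

/-- **Orthonormal dilation of frame vectors for unitary groups.**
If `𝒰` is a group of unitary operators on a separable complex Hilbert space `H` and
`f` is a frame vector for `𝒰` with frame bounds `A²`, `B²`, then there exist a larger
Hilbert space `K ⊇ H` (via an isometric embedding `ι` with closed range), a unitary group
`𝒱` on `K` whose restriction to `H` is a group isomorphism onto `𝒰` (given by `ρ : 𝒰 ≃* 𝒱`),
a positive operator `E : K → K` with range in `H` satisfying `A‖g‖ ≤ ‖Eg‖ ≤ B‖g‖` on `H`,
and a complete wandering vector `e ∈ K` for `𝒱` with `E(Ve) = (V|_H) f` for all `V ∈ 𝒱`. -/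
theorem orthonormal_dilation_unitary_group
    {H : Type} [NormedAddCommGroup H] [InnerProductSpace ℂ H] [CompleteSpace H]
    [TopologicalSpace.SeparableSpace H]
    (𝒰 : Subgroup (H ≃ₗᵢ[ℂ] H)) (f : H) (A B : ℝ) (hA : 0 < A) (hAB : A ≤ B)
    (hframe : ∀ x : H,
      A ^ 2 * ‖x‖ ^ 2 ≤ ∑' U : 𝒰, ‖⟪(U : H ≃ₗᵢ[ℂ] H) f, x⟫‖ ^ 2 ∧
      ∑' U : 𝒰, ‖⟪(U : H ≃ₗᵢ[ℂ] H) f, x⟫‖ ^ 2 ≤ B ^ 2 * ‖x‖ ^ 2) :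
    ∃ (K : Type) (_ : NormedAddCommGroup K) (_ : InnerProductSpace ℂ K) (_ : CompleteSpace K)
      (ι : H →ₗᵢ[ℂ] K) (𝒱 : Subgroup (K ≃ₗᵢ[ℂ] K)) (ρ : 𝒰 ≃* 𝒱)
      (E : K →L[ℂ] K) (e : K),
      -- `H` sits inside `K` as a closed subspace
      IsClosed (Set.range ι) ∧
      -- every `V ∈ 𝒱` maps `H` into `H`, and `ρ` realizes the restriction map
      -- `V ↦ V|_H` as a group isomorphism of `𝒱` onto `𝒰`
      (∀ U : 𝒰, ∀ x : H, ((ρ U : 𝒱) : K ≃ₗᵢ[ℂ] K) (ι x) = ι ((U : H ≃ₗᵢ[ℂ] H) x)) ∧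
      -- `E` is a positive operator from `K` into `H`
      E.IsPositive ∧ (∀ y : K, E y ∈ Set.range ι) ∧
      -- `A‖g‖ ≤ ‖Eg‖ ≤ B‖g‖` for all `g ∈ H`
      (∀ x : H, A * ‖ι x‖ ≤ ‖E (ι x)‖ ∧ ‖E (ι x)‖ ≤ B * ‖ι x‖) ∧
      -- `e` is a complete wandering vector for `𝒱`
      Orthonormal ℂ (fun V : 𝒱 => (V : K ≃ₗᵢ[ℂ] K) e) ∧
      (Submodule.span ℂ (Set.range fun V : 𝒱 => (V : K ≃ₗᵢ[ℂ] K) e)).topologicalClosure = ⊤ ∧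
      -- `E(Ve) = (V|_H) f` for all `V ∈ 𝒱`
      (∀ U : 𝒰, E (((ρ U : 𝒱) : K ≃ₗᵢ[ℂ] K) e) = ι ((U : H ≃ₗᵢ[ℂ] H) f)) :=
  orthonormal_dilation_unitary_group_general 𝒰.subtype f A B hA (hA.le.trans hAB) hframe
end

section
/- Let 𝒰 be a group of unitary operators on a complex Hilbert space H, let f ∈ H be a frame vector for 𝒰 with optimal frame bounds A² and B² and frame operator S, let Φ : H → ℓ²(𝒰) be the analysis operator of the canonical Parseval frame {S^{-1/2}Uf}_{U∈𝒰}, and define E = Φ S^{1/2} Φ* : ℓ²(𝒰) → ℓ²(𝒰). Then E is a positive operator with range contained in Φ(H), E e_U = Φ(Uf) for all U ∈ 𝒰, and A‖g‖ ≤ ‖Eg‖ ≤ B‖g‖ for all g ∈ Φ(H). -/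
local notation "⟪" x ", " y "⟫" => @inner ℂ _ _ x y

/-!
The analysis operator `Φ` of a family `v` satisfies `Φ† e_i = v i`, hence `Φ†Φ` is the frame
operator of `v`; moreover `T S T†` is the frame operator of `T ∘ v` whenever `S` is that of `v`.
The canonical frame `S^{-1/2} v` therefore has frame operator `1`, i.e. its analysis operator is an
isometry. So `E = Φ S^{1/2} Φ†` acts on `Φ(H)` as `S^{1/2}` acts on `H`, sends
`e_i` to `Φ S^{1/2} S^{-1/2} v i = Φ (v i)`, and the frame bounds of `v` are the bounds of
`‖S^{1/2} x‖² = ∑ |⟪x, v i⟫|²`.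
-/

section CStarAlgebra

variable {A : Type*} [CStarAlgebra A] [PartialOrder A] [StarOrderedRing A] {a b : A}

-- `a` and `b` are square roots of commuting elements, so `a * b` is a positive square root of `1`.
theorem mul_eq_one_of_mul_self_mul_mul_self_eq_one (ha : 0 ≤ a) (hb : 0 ≤ b)
    (h : a * a * (b * b) = 1) : a * b = 1 := by
  have hstar : b * b * (a * a) = 1 := by
    simpa [ha.isSelfAdjoint.star_eq, hb.isSelfAdjoint.star_eq] using congrArg star h
  have hcomm : Commute a b := by
    have hsq : Commute (a * a) (b * b) := h.trans hstar.symm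
    rw [← CFC.sqrt_mul_self a, ← CFC.sqrt_mul_self b]
    exact ((hsq.cfcₙ_nnreal _).symm.cfcₙ_nnreal _).symm
  have hab : a * b * (a * b) = 1 := by
    rw [hcomm.symm.mul_mul_mul_comm, h]
  exact (CFC.sqrt_unique hab (hcomm.mul_nonneg ha hb)).symm.trans CFC.sqrt_one

end CStarAlgebra

section FrameOperator

variable {ι 𝕜 H K : Type*} [RCLike 𝕜] [NormedAddCommGroup H] [InnerProductSpace 𝕜 H]
  [NormedAddCommGroup K] [InnerProductSpace 𝕜 K]

/-- `S` is the frame operator `x ↦ ∑ i, ⟪v i, x⟫ v i` of the family `v`, the series converging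
unconditionally; the frame inequalities are not part of the definition. -/
def IsFrameOperator (v : ι → H) (S : H →L[𝕜] H) : Prop :=
  ∀ x, HasSum (fun i => inner 𝕜 (v i) x • v i) (S x)

/-- `Φ` is the analysis operator `x ↦ (⟪v i, x⟫)ᵢ` of the family `v`, with values in `ℓ²`. Mathlib's
inner product is linear in its second argument, so `⟪v i, x⟫` is the paper's `⟨x, v i⟩`. -/
def IsAnalysisOperator (v : ι → H) (Φ : H →L[𝕜] lp (fun _ : ι => 𝕜) 2) : Prop :=
  ∀ x i, Φ x i = inner 𝕜 (v i) x

namespace IsFrameOperator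

variable {v : ι → H} {S S' : H →L[𝕜] H}

theorem unique (hS : IsFrameOperator v S) (hS' : IsFrameOperator v S') : S = S' :=
  ContinuousLinearMap.ext fun x => (hS x).unique (hS' x)

theorem hasSum_norm_inner_sq (hS : IsFrameOperator v S) (x : H) :
    HasSum (fun i => ‖inner 𝕜 (v i) x‖ ^ 2) (RCLike.re (inner 𝕜 x (S x))) := by
  simpa only [innerSL_apply_apply, inner_smul_right, RCLike.reCLM_apply,
    inner_mul_symm_re_eq_norm, norm_mul, norm_inner_symm x, ← sq] using
    ((hS x).mapL (innerSL 𝕜 x)).mapL RCLike.reCLM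

theorem tsum_norm_inner_sq {Q : H →L[𝕜] H} (hQ : Q.IsSymmetric) (hS : IsFrameOperator v (Q ∘L Q))
    (x : H) : ∑' i, ‖inner 𝕜 (v i) x‖ ^ 2 = ‖Q x‖ ^ 2 := by
  rw [(hS.hasSum_norm_inner_sq x).tsum_eq, ContinuousLinearMap.comp_apply, ← hQ.apply_clm,
    inner_self_eq_norm_sq]

theorem conj_adjoint [CompleteSpace H] [CompleteSpace K] (hS : IsFrameOperator v S)
    (T : H →L[𝕜] K) : IsFrameOperator (T ∘ v) (T ∘L S ∘L ContinuousLinearMap.adjoint T) := by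
  intro y
  simpa [Function.comp_def, ContinuousLinearMap.adjoint_inner_right] using
    (hS (ContinuousLinearMap.adjoint T y)).mapL T

end IsFrameOperator

namespace IsAnalysisOperator

variable [CompleteSpace H] {v : ι → H} {Φ : H →L[𝕜] lp (fun _ : ι => 𝕜) 2}

theorem adjoint_single [DecidableEq ι] (hΦ : IsAnalysisOperator v Φ) (i : ι) :
    ContinuousLinearMap.adjoint Φ (lp.single 2 i 1) = v i := by
  refine ext_inner_right 𝕜 fun x => ?_
  simp [ContinuousLinearMap.adjoint_inner_left, lp.inner_single_left, hΦ x i]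

theorem isFrameOperator_adjoint_comp_self (hΦ : IsAnalysisOperator v Φ) :
    IsFrameOperator v (ContinuousLinearMap.adjoint Φ ∘L Φ) := by
  classical
  intro x
  have hterm (i : ι) : ContinuousLinearMap.adjoint Φ (lp.single 2 i (Φ x i)) =
      inner 𝕜 (v i) x • v i := by
    rw [← mul_one (Φ x i), ← smul_eq_mul, lp.single_smul, map_smul, hΦ.adjoint_single, hΦ x i]
  simpa only [hterm, ContinuousLinearMap.comp_apply] using
    (lp.hasSum_single ENNReal.ofNat_ne_top (Φ x)).mapL (ContinuousLinearMap.adjoint Φ)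

theorem adjoint_comp_self_eq {S : H →L[𝕜] H} (hΦ : IsAnalysisOperator v Φ)
    (hS : IsFrameOperator v S) : ContinuousLinearMap.adjoint Φ ∘L Φ = S :=
  hΦ.isFrameOperator_adjoint_comp_self.unique hS

end IsAnalysisOperator

end FrameOperator

theorem dilation_operator_properties_general {ι H : Type*} [DecidableEq ι] [NormedAddCommGroup H]
    [InnerProductSpace ℂ H] [CompleteSpace H] {v : ι → H} {A B : ℝ} (hB : 0 ≤ B)
    (hframe : ∀ x : H, A ^ 2 * ‖x‖ ^ 2 ≤ ∑' i, ‖⟪v i, x⟫‖ ^ 2 ∧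
      ∑' i, ‖⟪v i, x⟫‖ ^ 2 ≤ B ^ 2 * ‖x‖ ^ 2)
    {S R Q : H →L[ℂ] H} (hS : IsFrameOperator v S)
    (hR : R.IsPositive) (hSR : S ∘L (R ∘L R) = ContinuousLinearMap.id ℂ H)
    (hQ : Q.IsPositive) (hQS : Q ∘L Q = S)
    {Φ : H →L[ℂ] lp (fun _ : ι => ℂ) 2} (hΦ : IsAnalysisOperator (R ∘ v) Φ)
    {E : lp (fun _ : ι => ℂ) 2 →L[ℂ] lp (fun _ : ι => ℂ) 2}
    (hE : E = Φ ∘L Q ∘L ContinuousLinearMap.adjoint Φ) :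
    E.IsPositive ∧ (∀ y, E y ∈ Set.range Φ) ∧
    (∀ i, E (lp.single 2 i (1 : ℂ)) = Φ (v i)) ∧
    (∀ g ∈ Set.range Φ, A * ‖g‖ ≤ ‖E g‖ ∧ ‖E g‖ ≤ B * ‖g‖) := by
  subst hQS hE
  have hQR : Q ∘L R = ContinuousLinearMap.id ℂ H :=
    mul_eq_one_of_mul_self_mul_mul_self_eq_one (Q.nonneg_iff_isPositive.2 hQ)
      (R.nonneg_iff_isPositive.2 hR) hSR
  have hRQ : R ∘L Q = ContinuousLinearMap.id ℂ H := by
    simpa only [ContinuousLinearMap.adjoint_comp, ContinuousLinearMap.adjoint_id,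
      hQ.isSelfAdjoint.adjoint_eq, hR.isSelfAdjoint.adjoint_eq] using
      congrArg ContinuousLinearMap.adjoint hQR
  have hΦΦ : ContinuousLinearMap.adjoint Φ ∘L Φ = ContinuousLinearMap.id ℂ H := by
    rw [hΦ.adjoint_comp_self_eq (hS.conj_adjoint R), hR.isSelfAdjoint.adjoint_eq,
      ContinuousLinearMap.comp_assoc Q, hQR, ContinuousLinearMap.comp_id, hRQ]
  have hnorm := (ContinuousLinearMap.norm_map_iff_adjoint_comp_self Φ).2 hΦΦ
  refine ⟨hQ.conj_adjoint Φ, fun y => ⟨_, rfl⟩, fun i => ?_, ?_⟩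
  · exact congrArg Φ <| (congrArg Q (hΦ.adjoint_single i)).trans (DFunLike.congr_fun hQR (v i))
  · rintro _ ⟨x, rfl⟩
    have hEx : ‖Φ (Q (ContinuousLinearMap.adjoint Φ (Φ x)))‖ = ‖Q x‖ := by
      rw [hnorm, ← ContinuousLinearMap.comp_apply (ContinuousLinearMap.adjoint Φ), hΦΦ,
        ContinuousLinearMap.id_apply]
    have hbounds := hframe x
    rw [hS.tsum_norm_inner_sq hQ.isSymmetric, ← mul_pow, ← mul_pow] at hbounds
    simp only [ContinuousLinearMap.comp_apply, hEx, hnorm]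
    exact ⟨le_of_sq_le_sq hbounds.1 (norm_nonneg _),
      le_of_sq_le_sq hbounds.2 (mul_nonneg hB (norm_nonneg x))⟩

/-- Let `f` be a frame vector for a group `𝒰` of unitaries on `H` with optimal frame bounds
`A²`, `B²` and frame operator `S`, let `Φ : H → ℓ²(𝒰)` be the analysis operator of the
canonical Parseval frame `{S^{-1/2}Uf}`, and set `E = Φ S^{1/2} Φ*`. Then `E` is positive,
has range contained in `Φ(H)`, satisfies `E e_U = Φ(Uf)` for all `U ∈ 𝒰`, and
`A‖g‖ ≤ ‖Eg‖ ≤ B‖g‖` for all `g ∈ Φ(H)`. -/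
theorem dilation_operator_properties
    {H : Type} [NormedAddCommGroup H] [InnerProductSpace ℂ H] [CompleteSpace H]
    (𝒰 : Subgroup (H ≃ₗᵢ[ℂ] H)) [DecidableEq 𝒰] (f : H) (A B : ℝ) (hA : 0 < A) (hAB : A ≤ B)
    -- `{Uf}_{U ∈ 𝒰}` is a frame for `H` with bounds `A²`, `B²` ...
    (hframe : ∀ x : H,
      A ^ 2 * ‖x‖ ^ 2 ≤ ∑' U : 𝒰, ‖⟪(U : H ≃ₗᵢ[ℂ] H) f, x⟫‖ ^ 2 ∧
      ∑' U : 𝒰, ‖⟪(U : H ≃ₗᵢ[ℂ] H) f, x⟫‖ ^ 2 ≤ B ^ 2 * ‖x‖ ^ 2)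
    -- ... and these bounds are optimal
    (hAopt : ∀ A' : ℝ, (∀ x : H, A' * ‖x‖ ^ 2 ≤ ∑' U : 𝒰, ‖⟪(U : H ≃ₗᵢ[ℂ] H) f, x⟫‖ ^ 2) →
      A' ≤ A ^ 2)
    (hBopt : ∀ B' : ℝ, (∀ x : H, ∑' U : 𝒰, ‖⟪(U : H ≃ₗᵢ[ℂ] H) f, x⟫‖ ^ 2 ≤ B' * ‖x‖ ^ 2) →
      B ^ 2 ≤ B')
    -- `S` is the frame operator of `{Uf}_{U ∈ 𝒰}`
    (S : H →L[ℂ] H)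
    (hS : ∀ x : H, HasSum (fun U : 𝒰 => ⟪(U : H ≃ₗᵢ[ℂ] H) f, x⟫ • (U : H ≃ₗᵢ[ℂ] H) f) (S x))
    -- `R = S^{-1/2}`: the positive square root of the inverse of `S`
    (R : H →L[ℂ] H) (hRpos : R.IsPositive)
    (hRS : (R ∘L R) ∘L S = ContinuousLinearMap.id ℂ H)
    (hSR : S ∘L (R ∘L R) = ContinuousLinearMap.id ℂ H)
    -- `Shalf = S^{1/2}`: the positive square root of `S`
    (Shalf : H →L[ℂ] H) (hShalfpos : Shalf.IsPositive) (hShalf : Shalf ∘L Shalf = S)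
    -- `Φ` is the analysis operator of the canonical Parseval frame `{S^{-1/2}Uf}`
    (Φ : H →L[ℂ] lp (fun _ : 𝒰 => ℂ) 2)
    (hΦ : ∀ (g : H) (U : 𝒰), Φ g U = ⟪R ((U : H ≃ₗᵢ[ℂ] H) f), g⟫)
    -- `E = Φ S^{1/2} Φ*`
    (E : lp (fun _ : 𝒰 => ℂ) 2 →L[ℂ] lp (fun _ : 𝒰 => ℂ) 2)
    (hE : E = Φ ∘L Shalf ∘L ContinuousLinearMap.adjoint Φ) :
    -- `E` is positive with range contained in `Φ(H)`
    E.IsPositive ∧ (∀ y : lp (fun _ : 𝒰 => ℂ) 2, E y ∈ Set.range Φ) ∧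
    -- `E e_U = Φ(Uf)` for all `U ∈ 𝒰`
    (∀ U : 𝒰, E (lp.single 2 U (1 : ℂ)) = Φ ((U : H ≃ₗᵢ[ℂ] H) f)) ∧
    -- `A‖g‖ ≤ ‖Eg‖ ≤ B‖g‖` for all `g ∈ Φ(H)`
    (∀ g ∈ Set.range Φ, A * ‖g‖ ≤ ‖E g‖ ∧ ‖E g‖ ≤ B * ‖g‖) :=
  dilation_operator_properties_general (hA.le.trans hAB) hframe hS hRpos hSR hShalfpos hShalf hΦ hE
end

section
/- Let a, b > 0, let M and T be unitary operators on a complex Hilbert space H satisfying TM = e^{-iab} MT, and suppose f ∈ H is such that {MᵐTⁿf : m,n ∈ ℤ} is a frame for H with optimal bounds A² and B² (0 < A ≤ B). Then there exist: a complex Hilbert space K and unitary operators M', T' on K with T'M' = e^{-iab} M'T'; vectors f₁ ∈ H and f₂ ∈ K such that {(MᵐTⁿf₁) ⊕ ((M')ᵐ(T')ⁿf₂) : m,n ∈ ℤ} is an orthonormal basis of H ⊕ K; and a positive operator E : H → H with A‖g‖ ≤ ‖Eg‖ ≤ B‖g‖ for all g ∈ H, such that E(MᵐTⁿf₁) = MᵐTⁿf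 for all m,n ∈ ℤ. -/
local notation "⟪" x ", " y "⟫" => @inner ℂ _ _ x y

/-!
Let `D : ℓ²(ℤ × ℤ) → H` be the synthesis operator of the frame, sending the basis vector `b (m, n)`
to `MᵐTⁿf`. The weighted shifts `M₀ b (m, n) = b (m + 1, n)` and `T₀ b (m, n) = cᵐ b (m, n + 1)`
satisfy the same relation `T₀M₀ = c M₀T₀` as `M, T`, and `D` intertwines the two pairs. Its polar
decomposition is `D = E W`, where `E = (D D†)^{1/2}` is positive and invertible by the frame
inequality and `W` is a coisometry. As `D D†` commutes with `M, T`, so does its square root `E`, and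
therefore `W` intertwines as well. Hence `ker W` reduces `M₀, T₀`, and the unitary
`x ↦ W x ⊕ (1 - W†W) x` onto `H ⊕ ker W` carries the orthonormal basis `b`, which is the Gabor
family of `b (0, 0)`, to the Gabor family of the image `f₁ ⊕ f₂` of `b (0, 0)`.
-/

section Powers

variable {𝕜 X Y : Type*} [RCLike 𝕜] [NormedAddCommGroup X] [InnerProductSpace 𝕜 X]
  [NormedAddCommGroup Y] [InnerProductSpace 𝕜 Y]

theorem apply_zpow_apply (u : X ≃ₗᵢ[𝕜] X) (k : ℤ) (x : X) : u ((u ^ k) x) = (u ^ (k + 1)) x := by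
  rw [← mul_self_zpow, LinearIsometryEquiv.coe_mul, Function.comp_apply]

theorem zpow_apply_of_succ {u : X ≃ₗᵢ[𝕜] X} {s : ℤ → X} (h : ∀ k, u (s k) = s (k + 1)) (k : ℤ) :
    (u ^ k) (s 0) = s k := by
  have step (j : ℤ) : (u ^ j) (s 0) = s j ↔ (u ^ (j + 1)) (s 0) = s (j + 1) := by
    rw [← apply_zpow_apply, ← h, u.injective.eq_iff]
  induction k with
  | zero => rfl
  | succ n ih => exact (step n).1 ih
  | pred n ih => exact (step _).2 (by rwa [sub_add_cancel])

theorem apply_zpow_of_apply_eq_smul {φ : X → Y} {u : X ≃ₗᵢ[𝕜] X} {v : Y ≃ₗᵢ[𝕜] Y} {c : 𝕜}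
    (hc : c ≠ 0) (h : ∀ x, φ (u x) = c • v (φ x)) (k : ℤ) (x : X) :
    φ ((u ^ k) x) = c ^ k • (v ^ k) (φ x) := by
  have untwisted (j : ℤ) : v ((c ^ j)⁻¹ • φ ((u ^ j) x)) =
      (c ^ (j + 1))⁻¹ • φ ((u ^ (j + 1)) x) := by
    rw [← apply_zpow_apply, h, smul_smul, zpow_add_one₀ hc, mul_inv, inv_mul_cancel_right₀ hc,
      map_smul]
  have orbit := zpow_apply_of_succ untwisted k
  rw [zpow_zero, inv_one, one_smul, zpow_zero, LinearIsometryEquiv.coe_one, id] at orbit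
  rw [orbit, smul_inv_smul₀ (zpow_ne_zero k hc)]

theorem apply_zpow_of_semiconj {φ : X → Y} {u : X ≃ₗᵢ[𝕜] X} {v : Y ≃ₗᵢ[𝕜] Y}
    (h : Function.Semiconj φ u v) (k : ℤ) (x : X) : φ ((u ^ k) x) = (v ^ k) (φ x) := by
  simpa using apply_zpow_of_apply_eq_smul (one_ne_zero (α := 𝕜)) (by simpa using h.eq) k x

end Powers

section GaborSystem

variable {𝕜 X Y : Type*} [RCLike 𝕜] [NormedAddCommGroup X] [InnerProductSpace 𝕜 X]
  [NormedAddCommGroup Y] [InnerProductSpace 𝕜 Y]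

/-- The unitaries `M, T` generate a Gabor type unitary system with phase `c`: `TM = c MT`.
The lattice `aℤ × bℤ` corresponds to `c = exp (-iab)`. -/
def IsGaborPair (c : 𝕜) (M T : X ≃ₗᵢ[𝕜] X) : Prop :=
  ∀ x, T (M x) = c • M (T x)

/-- The Gabor type family `(MᵐTⁿf)` generated by the vector `f`, indexed by `(m, n)`. -/
def gaborFamily (M T : X ≃ₗᵢ[𝕜] X) (f : X) (p : ℤ × ℤ) : X :=
  (M ^ p.1) ((T ^ p.2) f)

variable {M T : X ≃ₗᵢ[𝕜] X} {f : X}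

theorem map_gaborFamily {φ : X → Y} {M' T' : Y ≃ₗᵢ[𝕜] Y} (hM : Function.Semiconj φ M M')
    (hT : Function.Semiconj φ T T') (p : ℤ × ℤ) :
    φ (gaborFamily M T f p) = gaborFamily M' T' (φ f) p := by
  rw [gaborFamily, apply_zpow_of_semiconj hM, apply_zpow_of_semiconj hT, gaborFamily]

theorem gaborFamily_eq_of_shift {d : ℤ × ℤ → X} (hM : ∀ m n, M (d (m, n)) = d (m + 1, n))
    (hT : ∀ n, T (d (0, n)) = d (0, n + 1)) : gaborFamily M T (d 0) = d := by
  ext ⟨m, n⟩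
  have hTn : (T ^ n) (d 0) = d (0, n) := zpow_apply_of_succ (s := fun k => d (0, k)) hT n
  have hMm : (M ^ m) (d (0, n)) = d (m, n) :=
    zpow_apply_of_succ (s := fun k => d (k, n)) (hM · n) m
  rw [gaborFamily, hTn, hMm]

theorem apply_gaborFamily_fst (m n : ℤ) :
    M (gaborFamily M T f (m, n)) = gaborFamily M T f (m + 1, n) :=
  apply_zpow_apply M m _

theorem IsGaborPair.apply_gaborFamily_snd {c : 𝕜} (h : IsGaborPair c M T) (hc : c ≠ 0) (m n : ℤ) :
    T (gaborFamily M T f (m, n)) = c ^ m • gaborFamily M T f (m, n + 1) := by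
  rw [gaborFamily, apply_zpow_of_apply_eq_smul hc h, apply_zpow_apply, gaborFamily]

end GaborSystem

section HilbertBasis

open scoped lp in
theorem exists_nonempty_hilbertBasis.{u, v} (ι : Type u) (𝕜 : Type v) [RCLike 𝕜] :
    ∃ (L : Type max u v) (_ : NormedAddCommGroup L) (_ : InnerProductSpace 𝕜 L)
      (_ : CompleteSpace L), Nonempty (HilbertBasis ι 𝕜 L) :=
  ⟨ℓ²(ι, 𝕜), inferInstance, inferInstance, inferInstance, ⟨.ofRepr (.refl 𝕜 _)⟩⟩

variable {ι 𝕜 L H : Type*} [RCLike 𝕜] [NormedAddCommGroup L] [InnerProductSpace 𝕜 L]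
  [NormedAddCommGroup H] [InnerProductSpace 𝕜 H]

theorem continuousLinearMap_ext_hilbertBasis (b : HilbertBasis ι 𝕜 L) {F G : L →L[𝕜] H}
    (h : ∀ i, F (b i) = G (b i)) : F = G :=
  ContinuousLinearMap.ext_on
    (Submodule.dense_iff_topologicalClosure_eq_top.2 b.dense_span) (Set.forall_mem_range.2 h)

theorem norm_sq_eq_tsum_inner_hilbertBasis (b : HilbertBasis ι 𝕜 L) (x : L) :
    ‖x‖ ^ 2 = ∑' i, ‖inner 𝕜 (b i) x‖ ^ 2 := by
  simpa [b.repr_apply_apply] using lp.norm_rpow_eq_tsum (p := 2) (by norm_num) (b.repr x)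

theorem exists_hilbertBasis_apply_eq_map (b : HilbertBasis ι 𝕜 L) (e : L ≃ₗᵢ[𝕜] H) :
    ∃ d : HilbertBasis ι 𝕜 H, ∀ i, d i = e (b i) :=
  ⟨.ofRepr (e.symm.trans b.repr), fun _ => rfl⟩

theorem exists_hilbertBasis_apply_eq_smul [CompleteSpace L] (b : HilbertBasis ι 𝕜 L) (σ : ι ≃ ι)
    {w : ι → 𝕜} (hw : ∀ i, ‖w i‖ = 1) : ∃ d : HilbertBasis ι 𝕜 L, ∀ i, d i = w i • b (σ i) := by
  have hw₀ (i : ι) : w i ≠ 0 := norm_ne_zero_iff.1 (by simp [hw i])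
  have orthonormal : Orthonormal 𝕜 fun i => w i • b (σ i) := by
    refine ⟨fun i => ?_, fun i j hij => ?_⟩
    · rw [norm_smul, hw, b.orthonormal.1, one_mul]
    · change inner 𝕜 (w i • b (σ i)) (w j • b (σ j)) = 0
      rw [inner_smul_left, inner_smul_right,
        b.orthonormal.2 (σ.injective.ne hij), mul_zero, mul_zero]
  have span_le : Submodule.span 𝕜 (Set.range b) ≤
      Submodule.span 𝕜 (Set.range fun i => w i • b (σ i)) := by
    rw [Submodule.span_le, Set.range_subset_iff, σ.surjective.forall]
    exact fun i => (Submodule.smul_mem_iff _ (hw₀ i)).1 (Submodule.subset_span ⟨i, rfl⟩)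
  exact ⟨.mk orthonormal (b.dense_span.ge.trans (Submodule.topologicalClosure_mono span_le)),
    fun i => by rw [HilbertBasis.coe_mk]⟩

theorem exists_linearIsometryEquiv_apply_eq_smul [CompleteSpace L] (b : HilbertBasis ι 𝕜 L)
    (σ : ι ≃ ι) {w : ι → 𝕜} (hw : ∀ i, ‖w i‖ = 1) :
    ∃ U : L ≃ₗᵢ[𝕜] L, ∀ i, U (b i) = w i • b (σ i) := by
  classical
  obtain ⟨d, hd⟩ := exists_hilbertBasis_apply_eq_smul b σ hw
  refine ⟨b.repr.trans d.repr.symm, fun i => ?_⟩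
  rw [LinearIsometryEquiv.trans_apply, b.repr_self, d.repr_symm_single, hd]

theorem exists_isGaborPair_gaborFamily_eq [CompleteSpace L] (b : HilbertBasis (ℤ × ℤ) 𝕜 L) {c : 𝕜}
    (hc : ‖c‖ = 1) : ∃ M T : L ≃ₗᵢ[𝕜] L, IsGaborPair c M T ∧ gaborFamily M T (b 0) = b := by
  have hc₀ : c ≠ 0 := norm_ne_zero_iff.1 (by simp [hc])
  obtain ⟨M, hM⟩ := exists_linearIsometryEquiv_apply_eq_smul b
    ((Equiv.addRight (1 : ℤ)).prodCongr (Equiv.refl ℤ)) (w := fun _ => 1) (fun _ => norm_one)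
  obtain ⟨T, hT⟩ := exists_linearIsometryEquiv_apply_eq_smul b
    ((Equiv.refl ℤ).prodCongr (Equiv.addRight (1 : ℤ))) (w := fun p => c ^ p.1)
    (fun p => by rw [norm_zpow, hc, one_zpow])
  replace hM (m n : ℤ) : M (b (m, n)) = b (m + 1, n) := by simpa using hM (m, n)
  replace hT (m n : ℤ) : T (b (m, n)) = c ^ m • b (m, n + 1) := hT (m, n)
  have commutation : (T : L →L[𝕜] L) ∘L M = c • (M : L →L[𝕜] L) ∘L T :=
    continuousLinearMap_ext_hilbertBasis b fun ⟨m, n⟩ => by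
      simp [hM, hT, smul_smul, zpow_add_one₀ hc₀, mul_comm]
  exact ⟨M, T, DFunLike.congr_fun commutation, gaborFamily_eq_of_shift hM (by simpa using hT 0)⟩

end HilbertBasis

section Frame

open ContinuousLinearMap
open scoped lp

variable {ι 𝕜 L H : Type*} [RCLike 𝕜] [NormedAddCommGroup L] [InnerProductSpace 𝕜 L]
  [NormedAddCommGroup H] [InnerProductSpace 𝕜 H]

variable (𝕜) in
/-- The family `g` is a frame with bounds `α ≤ β`, not necessarily optimal. Summability of the
coefficients is not a field: `tsum` is `0` on a divergent series, so the lower bound forces it. -/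
structure IsFrame (g : ι → H) (α β : ℝ) : Prop where
  pos : 0 < α
  lower (x : H) : α * ‖x‖ ^ 2 ≤ ∑' i, ‖inner 𝕜 (g i) x‖ ^ 2
  upper (x : H) : ∑' i, ‖inner 𝕜 (g i) x‖ ^ 2 ≤ β * ‖x‖ ^ 2

namespace IsFrame

variable {g : ι → H} {α β : ℝ}

theorem summable (hg : IsFrame 𝕜 g α β) (x : H) : Summable fun i => ‖inner 𝕜 (g i) x‖ ^ 2 := by
  by_contra divergent
  have hx : α * ‖x‖ ^ 2 ≤ 0 := (hg.lower x).trans (tsum_eq_zero_of_not_summable divergent).le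
  have hx₀ : x = 0 := by
    contrapose! hx
    exact mul_pos hg.pos (pow_pos (norm_pos_iff.2 hx) 2)
  exact divergent (by simp [hx₀])

theorem exists_analysis (hg : IsFrame 𝕜 g α β) :
    ∃ Θ : H →L[𝕜] ℓ²(ι, 𝕜), ∀ x i, Θ x i = inner 𝕜 (g i) x := by
  let Θ : H →ₗ[𝕜] ℓ²(ι, 𝕜) :=
    { toFun := fun x => ⟨fun i => inner 𝕜 (g i) x,
        (memℓp_gen_iff (by norm_num)).2 (by simpa using hg.summable x)⟩
      map_add' := fun x y => lp.ext (funext fun i => inner_add_right _ _ _)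
      map_smul' := fun c x => lp.ext (funext fun i => inner_smul_right _ _ _) }
  refine ⟨Θ.mkContinuous (√β) fun x => ?_, fun x i => rfl⟩
  have norm_sq : ‖Θ x‖ ^ 2 = ∑' i, ‖Θ x i‖ ^ 2 := by
    simpa using lp.norm_rpow_eq_tsum (p := 2) (by norm_num) (Θ x)
  simpa [Real.sqrt_mul'] using Real.le_sqrt_of_sq_le (norm_sq.trans_le (hg.upper x))

variable [CompleteSpace L] [CompleteSpace H]

theorem exists_synthesis (hg : IsFrame 𝕜 g α β) (b : HilbertBasis ι 𝕜 L) :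
    ∃ D : L →L[𝕜] H, ∀ i, D (b i) = g i := by
  obtain ⟨Θ, hΘ⟩ := hg.exists_analysis
  let D : L →L[𝕜] H := adjoint ((b.repr.symm : ℓ²(ι, 𝕜) →L[𝕜] L) ∘L Θ)
  refine ⟨D, fun i => ext_inner_right 𝕜 fun x => ?_⟩
  calc inner 𝕜 (D (b i)) x = inner 𝕜 (b i) (b.repr.symm (Θ x)) := adjoint_inner_left _ _ _
    _ = Θ x i := by rw [← b.repr_apply_apply, LinearIsometryEquiv.apply_symm_apply]
    _ = inner 𝕜 (g i) x := hΘ x i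

end IsFrame

end Frame

section Adjoint

open ContinuousLinearMap

variable {ι 𝕜 L H : Type*} [RCLike 𝕜] [NormedAddCommGroup L] [InnerProductSpace 𝕜 L]
  [CompleteSpace L] [NormedAddCommGroup H] [InnerProductSpace 𝕜 H] [CompleteSpace H]
  {D : L →L[𝕜] H}

theorem norm_sq_adjoint_eq_tsum_inner (b : HilbertBasis ι 𝕜 L) (D : L →L[𝕜] H) (x : H) :
    ‖adjoint D x‖ ^ 2 = ∑' i, ‖inner 𝕜 (D (b i)) x‖ ^ 2 := by
  simp only [norm_sq_eq_tsum_inner_hilbertBasis b, adjoint_inner_right]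

theorem semiconj_adjoint {U₀ : L ≃ₗᵢ[𝕜] L} {U : H ≃ₗᵢ[𝕜] H} (h : Function.Semiconj D U₀ U) :
    Function.Semiconj (adjoint D) U U₀ := fun y =>
  ext_inner_right 𝕜 <| U₀.surjective.forall.2 fun x => by
    rw [adjoint_inner_left, h.eq, U.inner_map_map, U₀.inner_map_map, adjoint_inner_left]

end Adjoint

section Polar

open ContinuousLinearMap

variable {L H : Type*} [NormedAddCommGroup L] [InnerProductSpace ℂ L] [CompleteSpace L]
  [NormedAddCommGroup H] [InnerProductSpace ℂ H] [CompleteSpace H]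

/-- The positive operator `|D†| = (D D†)^{1/2}` on the codomain of `D`, the positive factor of the
polar decomposition `D = |D†| W`. For the synthesis operator `D` of a frame it is the square root
of the frame operator. -/
noncomputable def adjointAbs (D : L →L[ℂ] H) : H →L[ℂ] H :=
  CFC.sqrt (D ∘L adjoint D)

/-- The factor `W = |D†|⁻¹ D` of the polar decomposition `D = |D†| W`. `Ring.inverse` makes it zero
when `|D†|` is not invertible. -/
noncomputable def polarFactor (D : L →L[ℂ] H) : L →L[ℂ] H :=
  Ring.inverse (adjointAbs D) ∘L D

variable {D : L →L[ℂ] H}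

theorem comp_adjoint_nonneg (D : L →L[ℂ] H) : 0 ≤ D ∘L adjoint D :=
  (nonneg_iff_isPositive _).2 (isPositive_self_comp_adjoint D)

theorem isPositive_adjointAbs (D : L →L[ℂ] H) : (adjointAbs D).IsPositive :=
  (nonneg_iff_isPositive _).1 (CFC.sqrt_nonneg _)

theorem adjointAbs_mul_self (D : L →L[ℂ] H) : adjointAbs D * adjointAbs D = D ∘L adjoint D :=
  CFC.sqrt_mul_sqrt_self _ (comp_adjoint_nonneg D)

theorem norm_adjointAbs_apply (D : L →L[ℂ] H) (x : H) : ‖adjointAbs D x‖ = ‖adjoint D x‖ := by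
  rw [apply_norm_eq_sqrt_inner_adjoint_left, apply_norm_eq_sqrt_inner_adjoint_left,
    adjoint_adjoint, (isPositive_adjointAbs D).isSelfAdjoint.adjoint_eq, ← mul_def,
    adjointAbs_mul_self]

theorem isUnit_adjointAbs_of_le {α : ℝ} (hα : 0 < α) (h : ∀ x, α * ‖x‖ ^ 2 ≤ ‖adjoint D x‖ ^ 2) :
    IsUnit (adjointAbs D) := by
  refine (CFC.isUnit_sqrt_iff _ (comp_adjoint_nonneg D)).2 <|
    isUnit_of_forall_le_norm_inner_map _ (c := ⟨α, hα.le⟩) hα fun x => ?_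
  calc ‖x‖ ^ 2 * α ≤ ‖adjoint D x‖ ^ 2 := by rw [mul_comm]; exact h x
    _ = ‖⟪adjoint D x, adjoint D x⟫‖ := by simp
    _ = ‖⟪D (adjoint D x), x⟫‖ := by rw [adjoint_inner_right]

theorem adjointAbs_comp_polarFactor (hD : IsUnit (adjointAbs D)) :
    adjointAbs D ∘L polarFactor D = D := by
  rw [polarFactor, ← comp_assoc, ← mul_def, Ring.mul_inverse_cancel _ hD, one_def, id_comp]

theorem polarFactor_comp_adjoint (hD : IsUnit (adjointAbs D)) :
    polarFactor D ∘L adjoint (polarFactor D) = 1 := by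
  have self_adjoint : adjoint (Ring.inverse (adjointAbs D)) = Ring.inverse (adjointAbs D) := by
    rw [← star_eq_adjoint, ← Ring.inverse_star, (isPositive_adjointAbs D).isSelfAdjoint.star_eq]
  calc polarFactor D ∘L adjoint (polarFactor D)
      = Ring.inverse (adjointAbs D) * (D ∘L adjoint D) * Ring.inverse (adjointAbs D) := by
        rw [polarFactor, adjoint_comp, self_adjoint]; rfl
    _ = 1 := by
        rw [← adjointAbs_mul_self, Ring.inverse_mul_cancel_left _ _ hD,
          Ring.mul_inverse_cancel _ hD]

theorem semiconj_adjointAbs {U₀ : L ≃ₗᵢ[ℂ] L} {U : H ≃ₗᵢ[ℂ] H} (h : Function.Semiconj D U₀ U) :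
    Function.Semiconj (adjointAbs D) U U := by
  have commute_sq : Commute (D ∘L adjoint D) (U : H →L[ℂ] H) := ext fun x => by
    simp [(semiconj_adjoint h).eq, h.eq]
  have commute : Commute (adjointAbs D) (U : H →L[ℂ] H) := commute_sq.cfcₙ_nnreal _
  exact DFunLike.congr_fun commute.eq

theorem semiconj_polarFactor (hD : IsUnit (adjointAbs D)) {U₀ : L ≃ₗᵢ[ℂ] L} {U : H ≃ₗᵢ[ℂ] H}
    (h : Function.Semiconj D U₀ U) : Function.Semiconj (polarFactor D) U₀ U := by
  have polar (x : L) : adjointAbs D (polarFactor D x) = D x :=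
    DFunLike.congr_fun (adjointAbs_comp_polarFactor hD) x
  have injective : Function.Injective (adjointAbs D) :=
    ((isUnit_iff_bijective).1 hD).injective
  intro x
  apply injective
  rw [polar, h.eq, (semiconj_adjointAbs h).eq, polar]

end Polar

section FrameOperator

open ContinuousLinearMap

variable {ι L H : Type*} [NormedAddCommGroup L] [InnerProductSpace ℂ L] [CompleteSpace L]
  [NormedAddCommGroup H] [InnerProductSpace ℂ H] [CompleteSpace H]
  {b : HilbertBasis ι ℂ L} {g : ι → H} {D : L →L[ℂ] H}

theorem norm_sq_adjointAbs_apply (hD : ∀ i, D (b i) = g i) (x : H) :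
    ‖adjointAbs D x‖ ^ 2 = ∑' i, ‖⟪g i, x⟫‖ ^ 2 := by
  simp only [norm_adjointAbs_apply, norm_sq_adjoint_eq_tsum_inner b, hD]

theorem IsFrame.isUnit_adjointAbs {α β : ℝ} (hg : IsFrame ℂ g α β) (hD : ∀ i, D (b i) = g i) :
    IsUnit (adjointAbs D) :=
  isUnit_adjointAbs_of_le hg.pos fun x => by
    rw [← norm_adjointAbs_apply, norm_sq_adjointAbs_apply hD]
    exact hg.lower x

theorem IsFrame.norm_adjointAbs_bounds {A B : ℝ} (hB : 0 ≤ B) (hg : IsFrame ℂ g (A ^ 2) (B ^ 2))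
    (hD : ∀ i, D (b i) = g i) (x : H) :
    A * ‖x‖ ≤ ‖adjointAbs D x‖ ∧ ‖adjointAbs D x‖ ≤ B * ‖x‖ := by
  have lower : (A * ‖x‖) ^ 2 ≤ ‖adjointAbs D x‖ ^ 2 := by
    rw [mul_pow, norm_sq_adjointAbs_apply hD]
    exact hg.lower x
  have upper : ‖adjointAbs D x‖ ^ 2 ≤ (B * ‖x‖) ^ 2 := by
    rw [mul_pow, norm_sq_adjointAbs_apply hD]
    exact hg.upper x
  exact ⟨le_of_sq_le_sq lower (norm_nonneg _),
    le_of_sq_le_sq upper (mul_nonneg hB (norm_nonneg x))⟩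

end FrameOperator

section KernelRestriction

variable {𝕜 L H : Type*} [RCLike 𝕜] [NormedAddCommGroup L] [InnerProductSpace 𝕜 L]
  [NormedAddCommGroup H] [InnerProductSpace 𝕜 H] {W : L →L[𝕜] H}

theorem map_ker_of_semiconj {U₀ : L ≃ₗᵢ[𝕜] L} {U : H ≃ₗᵢ[𝕜] H} (h : Function.Semiconj W U₀ U) :
    W.ker.map (U₀ : L →ₗ[𝕜] L) = W.ker := by
  ext y
  obtain ⟨x, rfl⟩ := U₀.surjective y
  simp [h.eq]

/-- The restriction to `ker W` of a unitary `U₀` that `W` intertwines with a unitary `U`. -/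
noncomputable def kerRestrict {U₀ : L ≃ₗᵢ[𝕜] L} {U : H ≃ₗᵢ[𝕜] H} (h : Function.Semiconj W U₀ U) :
    W.ker ≃ₗᵢ[𝕜] W.ker :=
  (U₀.submoduleMap W.ker).trans (LinearIsometryEquiv.ofEq _ _ (map_ker_of_semiconj h))

theorem coe_kerRestrict {U₀ : L ≃ₗᵢ[𝕜] L} {U : H ≃ₗᵢ[𝕜] H} (h : Function.Semiconj W U₀ U)
    (x : W.ker) : (kerRestrict h x : L) = U₀ x := rfl

theorem IsGaborPair.kerRestrict {c : 𝕜} {M₀ T₀ : L ≃ₗᵢ[𝕜] L} {M T : H ≃ₗᵢ[𝕜] H}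
    (h : IsGaborPair c M₀ T₀) (hM : Function.Semiconj W M₀ M) (hT : Function.Semiconj W T₀ T) :
    IsGaborPair c (kerRestrict hM) (kerRestrict hT) :=
  fun x => Subtype.ext (h x)

end KernelRestriction

section Coisometry

open ContinuousLinearMap

variable {𝕜 L H : Type*} [RCLike 𝕜] [NormedAddCommGroup L] [InnerProductSpace 𝕜 L]
  [CompleteSpace L] [NormedAddCommGroup H] [InnerProductSpace 𝕜 H] [CompleteSpace H]
  {W : L →L[𝕜] H}

theorem apply_adjoint_apply_of_coisometry (hW : W ∘L adjoint W = 1) (x : H) :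
    W (adjoint W x) = x :=
  DFunLike.congr_fun hW x

/-- The orthogonal projection `1 - W†W` of `L` onto the kernel of a coisometry `W`. -/
noncomputable def kerProjection (hW : W ∘L adjoint W = 1) : L →L[𝕜] W.ker :=
  (1 - adjoint W ∘L W).codRestrict W.ker fun x => by
    simp [apply_adjoint_apply_of_coisometry hW]

theorem coe_kerProjection (hW : W ∘L adjoint W = 1) (x : L) :
    (kerProjection hW x : L) = x - adjoint W (W x) := rfl

theorem semiconj_kerProjection (hW : W ∘L adjoint W = 1) {U₀ : L ≃ₗᵢ[𝕜] L} {U : H ≃ₗᵢ[𝕜] H}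
    (h : Function.Semiconj W U₀ U) : Function.Semiconj (kerProjection hW) U₀ (kerRestrict h) := by
  intro x
  ext
  simp only [coe_kerRestrict, coe_kerProjection, h.eq, (semiconj_adjoint h).eq, map_sub]

theorem inner_kerProjection (hW : W ∘L adjoint W = 1) (x y : L) :
    inner 𝕜 (W x) (W y) + inner 𝕜 (kerProjection hW x) (kerProjection hW y) = inner 𝕜 x y := by
  have orthogonal (z : W.ker) : inner 𝕜 (z : L) (adjoint W (W y)) = 0 := by
    rw [adjoint_inner_right, show W z = 0 from z.2, inner_zero_left]
  rw [Submodule.coe_inner, coe_kerProjection hW y, inner_sub_right, orthogonal, sub_zero,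
    coe_kerProjection, inner_sub_left, adjoint_inner_left, add_sub_cancel]

/-- A coisometry `W : L → H` identifies `L` with `H ⊕ ker W`. -/
noncomputable def coisometryEquiv (hW : W ∘L adjoint W = 1) : L ≃ₗᵢ[𝕜] WithLp 2 (H × W.ker) :=
  LinearEquiv.isometryOfInner
    { toFun := fun x => WithLp.toLp 2 (W x, kerProjection hW x)
      map_add' := fun x y => by rw [map_add, map_add]; rfl
      map_smul' := fun c x => by rw [map_smul, map_smul]; rfl
      invFun := fun z => adjoint W z.fst + z.snd
      left_inv := fun x => by simp [coe_kerProjection]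
      right_inv := fun z => by
        have hz : W (adjoint W z.fst + z.snd) = z.fst := by
          rw [map_add, apply_adjoint_apply_of_coisometry hW, show W z.snd = 0 from z.snd.2,
            add_zero]
        refine WithLp.ofLp_injective 2 (Prod.ext hz (Subtype.ext ?_))
        change (kerProjection hW (adjoint W z.fst + z.snd) : L) = z.snd
        rw [coe_kerProjection, hz, add_sub_cancel_left] }
    (inner_kerProjection hW)

theorem coisometryEquiv_apply (hW : W ∘L adjoint W = 1) (x : L) :
    coisometryEquiv hW x = WithLp.toLp 2 (W x, kerProjection hW x) := rfl

end Coisometry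

section Dilation

open ContinuousLinearMap

theorem IsGaborPair.semiconj_of_map_gaborFamily {𝕜 L H : Type*} [RCLike 𝕜] [NormedAddCommGroup L]
    [InnerProductSpace 𝕜 L] [NormedAddCommGroup H] [InnerProductSpace 𝕜 H] {c : 𝕜} (hc : c ≠ 0)
    {M₀ T₀ : L ≃ₗᵢ[𝕜] L} {M T : H ≃ₗᵢ[𝕜] H} (h₀ : IsGaborPair c M₀ T₀) (h : IsGaborPair c M T)
    {b : HilbertBasis (ℤ × ℤ) 𝕜 L} {e : L} (he : gaborFamily M₀ T₀ e = b) {f : H} {D : L →L[𝕜] H}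
    (hD : ∀ p, D (b p) = gaborFamily M T f p) :
    Function.Semiconj D M₀ M ∧ Function.Semiconj D T₀ T := by
  have semiconj_M : D ∘L (M₀ : L →L[𝕜] L) = (M : H →L[𝕜] H) ∘L D :=
    continuousLinearMap_ext_hilbertBasis b fun ⟨m, n⟩ => by
      change D (M₀ (b (m, n))) = M (D (b (m, n)))
      rw [hD, apply_gaborFamily_fst, ← hD, ← he, apply_gaborFamily_fst]
  have semiconj_T : D ∘L (T₀ : L →L[𝕜] L) = (T : H →L[𝕜] H) ∘L D :=
    continuousLinearMap_ext_hilbertBasis b fun ⟨m, n⟩ => by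
      change D (T₀ (b (m, n))) = T (D (b (m, n)))
      rw [hD, h.apply_gaborFamily_snd hc, ← hD, ← he, h₀.apply_gaborFamily_snd hc, map_smul]
  exact ⟨DFunLike.congr_fun semiconj_M, DFunLike.congr_fun semiconj_T⟩

theorem exists_hilbertBasis_toLp_gaborFamily {𝕜 L H : Type*} [RCLike 𝕜] [NormedAddCommGroup L]
    [InnerProductSpace 𝕜 L] [CompleteSpace L] [NormedAddCommGroup H] [InnerProductSpace 𝕜 H]
    [CompleteSpace H] {W : L →L[𝕜] H} (hW : W ∘L adjoint W = 1) {M₀ T₀ : L ≃ₗᵢ[𝕜] L}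
    {M T : H ≃ₗᵢ[𝕜] H} (hM : Function.Semiconj W M₀ M) (hT : Function.Semiconj W T₀ T)
    {b : HilbertBasis (ℤ × ℤ) 𝕜 L} {e : L} (he : gaborFamily M₀ T₀ e = b) :
    ∃ d : HilbertBasis (ℤ × ℤ) 𝕜 (WithLp 2 (H × W.ker)), (fun p => WithLp.toLp 2
      (gaborFamily M T (W e) p,
        gaborFamily (kerRestrict hM) (kerRestrict hT) (kerProjection hW e) p)) = d := by
  obtain ⟨d, hd⟩ := exists_hilbertBasis_apply_eq_map b (coisometryEquiv hW)
  refine ⟨d, funext fun p => ?_⟩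
  rw [hd, ← he, coisometryEquiv_apply, map_gaborFamily hM hT,
    map_gaborFamily (semiconj_kerProjection hW hM) (semiconj_kerProjection hW hT)]

theorem gabor_frame_dilation_general {H : Type*} [NormedAddCommGroup H] [InnerProductSpace ℂ H]
    [CompleteSpace H] {c : ℂ} (hc : ‖c‖ = 1) {M T : H ≃ₗᵢ[ℂ] H} (hMT : IsGaborPair c M T) {f : H}
    {A B : ℝ} (hB : 0 ≤ B) (hframe : IsFrame ℂ (gaborFamily M T f) (A ^ 2) (B ^ 2)) :
    ∃ (K : Type) (_ : NormedAddCommGroup K) (_ : InnerProductSpace ℂ K) (_ : CompleteSpace K)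
      (M' T' : K ≃ₗᵢ[ℂ] K) (f₁ : H) (f₂ : K) (E : H →L[ℂ] H),
      IsGaborPair c M' T' ∧
      Orthonormal ℂ (fun p => WithLp.toLp 2 (gaborFamily M T f₁ p, gaborFamily M' T' f₂ p)) ∧
      (Submodule.span ℂ (Set.range fun p =>
        WithLp.toLp 2 (gaborFamily M T f₁ p, gaborFamily M' T' f₂ p))).topologicalClosure = ⊤ ∧
      E.IsPositive ∧
      (∀ x, A * ‖x‖ ≤ ‖E x‖ ∧ ‖E x‖ ≤ B * ‖x‖) ∧
      ∀ m n, E (gaborFamily M T f₁ (m, n)) = gaborFamily M T f (m, n) := by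
  obtain ⟨L, _, _, _, ⟨b⟩⟩ := exists_nonempty_hilbertBasis (ℤ × ℤ) ℂ
  obtain ⟨M₀, T₀, hMT₀, hb⟩ := exists_isGaborPair_gaborFamily_eq b hc
  obtain ⟨D, hD⟩ := hframe.exists_synthesis b
  have hE : IsUnit (adjointAbs D) := hframe.isUnit_adjointAbs hD
  have hW := polarFactor_comp_adjoint hE
  obtain ⟨hDM, hDT⟩ :=
    hMT₀.semiconj_of_map_gaborFamily (norm_ne_zero_iff.1 (by simp [hc])) hMT hb hD
  have hWM := semiconj_polarFactor hE hDM
  have hWT := semiconj_polarFactor hE hDT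
  obtain ⟨d, hd⟩ := exists_hilbertBasis_toLp_gaborFamily hW hWM hWT hb
  refine ⟨(polarFactor D).ker, inferInstance, inferInstance, inferInstance, kerRestrict hWM,
    kerRestrict hWT, polarFactor D (b 0), kerProjection hW (b 0), adjointAbs D,
    hMT₀.kerRestrict hWM hWT, ?_, ?_, isPositive_adjointAbs D,
    hframe.norm_adjointAbs_bounds hB hD, fun m n => ?_⟩
  · rw [hd]; exact d.orthonormal
  · rw [hd]; exact d.dense_span
  · rw [← map_gaborFamily hWM hWT, hb, ← comp_apply, adjointAbs_comp_polarFactor hE, hD]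

end Dilation

/-- **Orthonormal dilation for Gabor type unitary systems.** Let `M, T` be unitaries on `H`
with `TM = e^{-iab}MT` and suppose `{MᵐTⁿf}` is a frame for `H` with optimal bounds `A²`,
`B²`. Then there are a Hilbert space `K` with unitaries `M', T'` satisfying the same
commutation relation, vectors `f₁ ∈ H`, `f₂ ∈ K` with `{MᵐTⁿf₁ ⊕ (M')ᵐ(T')ⁿf₂}` an
orthonormal basis of `H ⊕ K`, and a positive operator `E : H → H` with
`A‖g‖ ≤ ‖Eg‖ ≤ B‖g‖` such that `E(MᵐTⁿf₁) = MᵐTⁿf` for all `m, n ∈ ℤ`. -/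
theorem gabor_frame_dilation
    {H : Type} [NormedAddCommGroup H] [InnerProductSpace ℂ H] [CompleteSpace H]
    (a b : ℝ) (ha : 0 < a) (hb : 0 < b)
    -- `M, T` form a Gabor type unitary system: `TM = e^{-iab} MT`
    (M T : H ≃ₗᵢ[ℂ] H)
    (hMT : ∀ x : H, T (M x) = Complex.exp (-(Complex.I * (a * b))) • M (T x))
    -- `{MᵐTⁿ f}` is a frame for `H` with bounds `A²`, `B²` ...
    (f : H) (A B : ℝ) (hA : 0 < A) (hAB : A ≤ B)
    (hframe : ∀ x : H,
      A ^ 2 * ‖x‖ ^ 2 ≤ ∑' p : ℤ × ℤ, ‖⟪(M ^ p.1) ((T ^ p.2) f), x⟫‖ ^ 2 ∧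
      ∑' p : ℤ × ℤ, ‖⟪(M ^ p.1) ((T ^ p.2) f), x⟫‖ ^ 2 ≤ B ^ 2 * ‖x‖ ^ 2)
    -- ... and these bounds are optimal
    (hAopt : ∀ A' : ℝ,
      (∀ x : H, A' * ‖x‖ ^ 2 ≤ ∑' p : ℤ × ℤ, ‖⟪(M ^ p.1) ((T ^ p.2) f), x⟫‖ ^ 2) → A' ≤ A ^ 2)
    (hBopt : ∀ B' : ℝ,
      (∀ x : H, ∑' p : ℤ × ℤ, ‖⟪(M ^ p.1) ((T ^ p.2) f), x⟫‖ ^ 2 ≤ B' * ‖x‖ ^ 2) → B ^ 2 ≤ B') :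
    ∃ (K : Type) (_ : NormedAddCommGroup K) (_ : InnerProductSpace ℂ K) (_ : CompleteSpace K)
      (M' T' : K ≃ₗᵢ[ℂ] K) (f₁ : H) (f₂ : K) (E : H →L[ℂ] H),
      -- `M', T'` form a Gabor type unitary system of the same lattice
      (∀ y : K, T' (M' y) = Complex.exp (-(Complex.I * (a * b))) • M' (T' y)) ∧
      -- `{(MᵐTⁿf₁) ⊕ ((M')ᵐ(T')ⁿf₂)}` is an orthonormal basis of `H ⊕ K`
      Orthonormal ℂ (fun p : ℤ × ℤ =>
        (WithLp.equiv 2 (H × K)).symm ((M ^ p.1) ((T ^ p.2) f₁), (M' ^ p.1) ((T' ^ p.2) f₂))) ∧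
      (Submodule.span ℂ (Set.range fun p : ℤ × ℤ =>
        (WithLp.equiv 2 (H × K)).symm ((M ^ p.1) ((T ^ p.2) f₁),
          (M' ^ p.1) ((T' ^ p.2) f₂)))).topologicalClosure = ⊤ ∧
      -- `E` is positive with `A‖g‖ ≤ ‖Eg‖ ≤ B‖g‖`
      E.IsPositive ∧
      (∀ g : H, A * ‖g‖ ≤ ‖E g‖ ∧ ‖E g‖ ≤ B * ‖g‖) ∧
      -- `E(MᵐTⁿf₁) = MᵐTⁿf`
      (∀ m n : ℤ, E ((M ^ m) ((T ^ n) f₁)) = (M ^ m) ((T ^ n) f)) :=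
  gabor_frame_dilation_general (by simp [Complex.norm_exp]) hMT (hA.le.trans hAB)
    ⟨by positivity, fun x => (hframe x).1, fun x => (hframe x).2⟩
end
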